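/- Let G be a bipartite graph with parts A and B (every edge of G joins a vertex of A to a vertex of B) which is not the complete bipartite graph on (A, B), i.e., some a ∈ A and b ∈ B are non-adjacent. Let u_B be the number of vertices in B that are adjacent to all vertices of A, and let δ_A be the minimum degree among the vertices of A (so |B| − δ_A ≥ 1). Then box(G) ≥ (|B| − u_B)/(2(|B| − δ_A)). -/

import Mathlib

/-!
Fix any representation of `G` as an intersection of `k` interval graphs and let `I` be one of them.
Among the intervals of the vertices of `A`, let `a₀` have the smallest right endpoint and `a₁` the
largest left endpoint. If `b ∈ B` misses some vertex of `A` in `I`, then the interval of `b` lies to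
the right of that of `a₀` or to the left of that of `a₁`, so `b` is a non-neighbour of `a₀` or of
`a₁` in `I`, hence in `G`. Every vertex of `A` has at most `|B| - δ_A` non-neighbours in `B`, so `I`
accounts for at most `2(|B| - δ_A)` such `b` (`card_missed_le`). Each of the `|B| - u_B` vertices of
`B` that are not adjacent to all of `A` is accounted for by one of the `k` graphs, which gives
`|B| - u_B ≤ 2k(|B| - δ_A)`.

As `boxicity` is an infimum over `ℕ`, it must also be known that `G` has some representation:
a finite graph is the intersection, over its non-edges `e`, of the complete graphs without `e`
(`exists_interval_representation`).
-/

/-- `I` is an interval graph: it can be represented by assigning to each vertex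
a closed real interval so that two distinct vertices are adjacent in `I`
iff their intervals intersect. -/
def IsIntervalGraph {V : Type*} (I : SimpleGraph V) : Prop :=
  ∃ f : V → Set ℝ, (∀ v, ∃ a b : ℝ, a ≤ b ∧ f v = Set.Icc a b) ∧
    ∀ u v : V, u ≠ v → (I.Adj u v ↔ (f u ∩ f v).Nonempty)

/-- The boxicity of `G`: the least `k` such that `G` is the intersection
(infimum) of `k` interval graphs on the same vertex set. -/
noncomputable def boxicity {V : Type*} (G : SimpleGraph V) : ℕ :=
  sInf {k : ℕ | ∃ I : Fin k → SimpleGraph V,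
    (∀ i, IsIntervalGraph (I i)) ∧ G = ⨅ i, I i}

/-- The number of edges of `G`. -/
noncomputable def numEdges {V : Type*} (G : SimpleGraph V) : ℕ :=
  G.edgeSet.ncard

/-- Interval graphs described by the left and right endpoints of the intervals. -/
lemma isIntervalGraph_iff_endpoints {V : Type*} (I : SimpleGraph V) :
    IsIntervalGraph I ↔ ∃ l r : V → ℝ, (∀ v, l v ≤ r v) ∧
      ∀ u v : V, u ≠ v → (I.Adj u v ↔ l u ≤ r v ∧ l v ≤ r u) := by
  have key : ∀ l r : V → ℝ, (∀ v, l v ≤ r v) → ∀ u v,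
      ((Set.Icc (l u) (r u) ∩ Set.Icc (l v) (r v)).Nonempty ↔ l u ≤ r v ∧ l v ≤ r u) := by
    intro l r h u v
    rw [Set.Icc_inter_Icc, Set.nonempty_Icc]
    have := h u
    have := h v
    simp only [sup_le_iff, le_inf_iff]
    tauto
  constructor
  · rintro ⟨f, hf, hadj⟩
    choose l r hlr hf using hf
    refine ⟨l, r, hlr, fun u v huv => ?_⟩
    rw [hadj u v huv, hf u, hf v, key l r hlr]
  · rintro ⟨l, r, hlr, hadj⟩
    refine ⟨fun v => Set.Icc (l v) (r v), fun v => ⟨l v, r v, hlr v, rfl⟩, fun u v huv => ?_⟩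
    rw [hadj u v huv, key l r hlr]

/-- A complete graph without the edge `uv` is an interval graph: `u` and `v` get the two endpoints
of `[0, 1]`, every other vertex the whole of it. -/
lemma isIntervalGraph_top_deleteEdge {V : Type*} (u v : V) (huv : u ≠ v) :
    IsIntervalGraph ((⊤ : SimpleGraph V).deleteEdges {s(u, v)}) := by
  classical
  rw [isIntervalGraph_iff_endpoints]
  refine ⟨fun w => if w = v then 1 else 0, fun w => if w = u then 0 else 1, ?_, ?_⟩
  · intro w
    dsimp only
    split_ifs <;> simp_all
  · intro x y hxy
    simp only [SimpleGraph.deleteEdges_adj, SimpleGraph.top_adj, Set.mem_singleton_iff,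
      Sym2.eq_iff]
    split_ifs <;> simp_all

lemma exists_interval_representation {V : Type*} [Finite V] (G : SimpleGraph V) :
    ∃ k : ℕ, ∃ I : Fin k → SimpleGraph V, (∀ i, IsIntervalGraph (I i)) ∧ G = ⨅ i, I i := by
  obtain ⟨k, ⟨e⟩⟩ := Finite.exists_equiv_fin {p : V × V // p.1 ≠ p.2 ∧ ¬G.Adj p.1 p.2}
  refine ⟨k, fun i => (⊤ : SimpleGraph V).deleteEdges {s((e.symm i).1.1, (e.symm i).1.2)},
    fun i => isIntervalGraph_top_deleteEdge _ _ (e.symm i).2.1, ?_⟩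
  ext x y
  simp only [SimpleGraph.iInf_adj, SimpleGraph.deleteEdges_adj, SimpleGraph.top_adj,
    Set.mem_singleton_iff]
  constructor
  · intro h
    refine ⟨fun i => ⟨h.ne, fun hs => (e.symm i).2.2 ?_⟩, h.ne⟩
    rwa [← SimpleGraph.mem_edgeSet, ← hs]
  · rintro ⟨h, hne⟩
    by_contra hG
    simpa using (h (e ⟨(x, y), hne, hG⟩)).2

/-- If every vertex of `A` has at most `m` non-neighbours in `B`, then in an interval graph at most
`2m` vertices of `B` miss some vertex of `A`. -/
lemma card_missed_le {V : Type*} (I : SimpleGraph V) (hI : IsIntervalGraph I)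
    (A B : Finset V) (hdisj : Disjoint A B) (m : ℕ) [DecidableRel I.Adj]
    (hm : ∀ a ∈ A, (B.filter (fun b => ¬I.Adj a b)).card ≤ m) :
    (B.filter (fun b => ∃ a ∈ A, ¬I.Adj a b)).card ≤ 2 * m := by
  classical
  obtain ⟨l, r, -, hadj⟩ := (isIntervalGraph_iff_endpoints I).1 hI
  rcases A.eq_empty_or_nonempty with rfl | hA
  · simp
  obtain ⟨a₀, ha₀, hmin⟩ := A.exists_min_image r hA
  obtain ⟨a₁, ha₁, hmax⟩ := A.exists_max_image l hA
  have hsub : B.filter (fun b => ∃ a ∈ A, ¬I.Adj a b) ⊆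
      B.filter (fun b => ¬I.Adj a₀ b) ∪ B.filter (fun b => ¬I.Adj a₁ b) := by
    intro b hb
    simp only [Finset.mem_filter, Finset.mem_union] at hb ⊢
    obtain ⟨hb, a, ha, hab⟩ := hb
    have hne : ∀ c ∈ A, c ≠ b := fun c hc e => Finset.disjoint_left.1 hdisj hc (e ▸ hb)
    rw [hadj a b (hne a ha)] at hab
    rw [hadj a₀ b (hne _ ha₀), hadj a₁ b (hne _ ha₁)]
    have h0 := hmin a ha
    have h1 := hmax a ha
    by_contra! hcon
    have hc0 := hcon.1 hb
    have hc1 := hcon.2 hb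
    exact hab ⟨h1.trans hc1.1, hc0.2.trans h0⟩
  calc _ ≤ _ := Finset.card_le_card hsub
    _ ≤ _ := Finset.card_union_le _ _
    _ ≤ 2 * m := by have := hm _ ha₀; have := hm _ ha₁; omega

theorem box_lower_bound_bipartite {V : Type*} [Fintype V] [DecidableEq V]
    (G : SimpleGraph V) [DecidableRel G.Adj] (A B : Finset V)
    (hdisj : Disjoint A B) (hcover : A ∪ B = Finset.univ)
    (hbip : ∀ u v : V, G.Adj u v → (u ∈ A ∧ v ∈ B) ∨ (u ∈ B ∧ v ∈ A))
    (hnc : ∃ a ∈ A, ∃ b ∈ B, ¬G.Adj a b)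
    (uB : ℕ) (huB : uB = (B.filter (fun b => ∀ a ∈ A, G.Adj a b)).card)
    (δA : ℕ) (hδA : δA = sInf {d : ℕ | ∃ a ∈ A, G.degree a = d}) :
    (boxicity G : ℝ) ≥
      ((B.card : ℝ) - uB) / (2 * ((B.card : ℝ) - δA)) := by
  classical
  obtain ⟨I, hI, hG⟩ : ∃ I : Fin (boxicity G) → SimpleGraph V,
      (∀ i, IsIntervalGraph (I i)) ∧ G = ⨅ i, I i :=
    Nat.sInf_mem (exists_interval_representation G)
  have hle : ∀ a ∈ A, δA ≤ G.degree a := fun a ha => hδA ▸ Nat.sInf_le ⟨a, ha, rfl⟩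
  have hdeg : ∀ a ∈ A, G.degree a + (B.filter (fun b => ¬G.Adj a b)).card = B.card := by
    intro a ha
    have hN : G.neighborFinset a = B.filter (fun b => G.Adj a b) := by
      ext b
      simp only [SimpleGraph.mem_neighborFinset, Finset.mem_filter]
      refine ⟨fun h => ⟨?_, h⟩, fun h => h.2⟩
      rcases hbip a b h with h' | h'
      · exact h'.2
      · exact absurd h'.1 (Finset.disjoint_left.1 hdisj ha)
    rw [← SimpleGraph.card_neighborFinset_eq_degree, hN]
    exact Finset.card_filter_add_card_filter_not _
  have hlt : δA < B.card := by
    obtain ⟨a, ha, b, hb, hab⟩ := hnc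
    have : 0 < (B.filter (fun b => ¬G.Adj a b)).card :=
      Finset.card_pos.2 ⟨b, Finset.mem_filter.2 ⟨hb, hab⟩⟩
    have := hle a ha
    have := hdeg a ha
    omega
  have hIG : ∀ i, G ≤ I i := fun i => hG ▸ iInf_le I i
  have hcard : ∀ i, (B.filter (fun b => ∃ a ∈ A, ¬(I i).Adj a b)).card ≤ 2 * (B.card - δA) := by
    intro i
    refine card_missed_le (I i) (hI i) A B hdisj _ fun a ha => ?_
    have hmono : (B.filter (fun b => ¬(I i).Adj a b)).card ≤
        (B.filter (fun b => ¬G.Adj a b)).card :=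
      Finset.card_le_card (Finset.monotone_filter_right _ fun b _ h h' => h (hIG i h'))
    have := hle a ha
    have := hdeg a ha
    omega
  have hcov : B.filter (fun b => ¬∀ a ∈ A, G.Adj a b) ⊆
      Finset.univ.biUnion fun i => B.filter (fun b => ∃ a ∈ A, ¬(I i).Adj a b) := by
    intro b hb
    simp only [Finset.mem_filter, Finset.mem_biUnion, Finset.mem_univ, true_and] at hb ⊢
    obtain ⟨hb, hna⟩ := hb
    push Not at hna
    obtain ⟨a, ha, hab⟩ := hna
    have hne : a ≠ b := fun e => Finset.disjoint_left.1 hdisj ha (e ▸ hb)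
    by_contra! hcon
    apply hab
    rw [hG, SimpleGraph.iInf_adj]
    exact ⟨fun i => hcon i hb a ha, hne⟩
  have hbound : (B.filter (fun b => ¬∀ a ∈ A, G.Adj a b)).card ≤
      boxicity G * (2 * (B.card - δA)) := by
    refine (Finset.card_le_card hcov).trans ?_
    simpa using Finset.card_biUnion_le_card_mul Finset.univ _ _ fun i _ => hcard i
  have hsplit : uB + (B.filter (fun b => ¬∀ a ∈ A, G.Adj a b)).card = B.card := by
    rw [huB]
    exact Finset.card_filter_add_card_filter_not _
  have hpos : (0 : ℝ) < 2 * ((B.card : ℝ) - δA) := by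
    have : (δA : ℝ) < B.card := by exact_mod_cast hlt
    linarith
  rw [ge_iff_le, div_le_iff₀ hpos]
  have hfinal : B.card ≤ uB + boxicity G * (2 * (B.card - δA)) := by omega
  have hcast : (B.card : ℝ) ≤ uB + boxicity G * (2 * ((B.card : ℝ) - δA)) := by
    rw [← Nat.cast_sub hlt.le]
    exact_mod_cast hfinal
  linarith
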